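/- arXiv:2104.12105 — 3 statements merged into one kernel-verified Lean document; each statement's English description precedes it below -/
import Mathlib

section
/- Let k be a perfect field of characteristic p. For every n ≥ 0, p is a non-zero-divisor on the quotient ring W(k)⟦X⟧/(E_n); that is, W(k)⟦X⟧/(E_n) has no p-torsion. -/
open PowerSeries

/-! In a commutative ring where `p = 0`, Frobenius gives `E_n * x ^ p ^ n = x ^ p ^ (n + 1)` for
`E_n = ∑ i < p, (1 + x) ^ (i * p ^ n)`, so `E_n` divides a power of `x`. Hence, if `X` is a
non-zero-divisor modulo `p`, so is `E_n`. Two permutations of regular sequences finish the proof: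
the regular sequence `(X, p)` of `A⟦X⟧` yields `(p, X)`, hence `(p, E_n)`, hence `(E_n, p)`. -/

open scoped nonZeroDivisors

section CommRing

variable {R : Type*} [CommRing R]

lemma mk_span_singleton_mem_nonZeroDivisors_iff {a b : R} :
    Ideal.Quotient.mk (Ideal.span {a}) b ∈ (R ⧸ Ideal.span {a})⁰ ↔ ∀ r, a ∣ b * r → a ∣ r := by
  simp only [mem_nonZeroDivisors_iff_left, Ideal.Quotient.mk_surjective.forall, ← map_mul,
    Ideal.Quotient.eq_zero_iff_dvd]

lemma mk_span_singleton_mem_nonZeroDivisors_swap {a b : R} (ha : a ∈ R⁰)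
    (hb : Ideal.Quotient.mk (Ideal.span {a}) b ∈ (R ⧸ Ideal.span {a})⁰) :
    Ideal.Quotient.mk (Ideal.span {b}) a ∈ (R ⧸ Ideal.span {b})⁰ := by
  rw [mk_span_singleton_mem_nonZeroDivisors_iff] at hb ⊢
  rintro r ⟨s, hs⟩
  obtain ⟨t, rfl⟩ := hb s ⟨r, hs.symm⟩
  refine ⟨t, (mul_cancel_left_mem_nonZeroDivisors ha).1 ?_⟩
  rw [hs, mul_left_comm]

variable (p : ℕ) [Fact p.Prime]

lemma one_add_pow_prime_pow_of_natCast_eq_zero (hp : (p : R) = 0) (x : R) (n : ℕ) :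
    (1 + x) ^ p ^ n = 1 + x ^ p ^ n := by
  obtain ⟨r, hr⟩ := exists_add_pow_prime_pow_eq (Fact.out : p.Prime) 1 x n
  simpa [hp] using hr

lemma sum_one_add_pow_mul_pow_of_natCast_eq_zero (hp : (p : R) = 0) (x : R) (n : ℕ) :
    (∑ i ∈ Finset.range p, (1 + x) ^ (i * p ^ n)) * x ^ p ^ n = x ^ p ^ (n + 1) := by
  have frobenius := one_add_pow_prime_pow_of_natCast_eq_zero p hp x
  calc (∑ i ∈ Finset.range p, (1 + x) ^ (i * p ^ n)) * x ^ p ^ n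
      = (∑ i ∈ Finset.range p, ((1 + x) ^ p ^ n) ^ i) * ((1 + x) ^ p ^ n - 1) := by
        simp only [pow_mul', frobenius, add_sub_cancel_left]
    _ = (1 + x) ^ p ^ (n + 1) - 1 := by rw [geom_sum_mul, ← pow_mul, ← pow_succ]
    _ = x ^ p ^ (n + 1) := by rw [frobenius, add_sub_cancel_left]

lemma sum_one_add_pow_mem_nonZeroDivisors_of_natCast_eq_zero (hp : (p : R) = 0) {x : R}
    (hx : x ∈ R⁰) (n : ℕ) : ∑ i ∈ Finset.range p, (1 + x) ^ (i * p ^ n) ∈ R⁰ := by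
  have hpow : x ^ p ^ (n + 1) ∈ R⁰ := pow_mem hx _
  rw [← sum_one_add_pow_mul_pow_of_natCast_eq_zero p hp] at hpow
  exact (mul_mem_nonZeroDivisors.1 hpow).1

lemma mk_natCast_mem_nonZeroDivisors_quotient_sum_one_add_pow (hp : (p : R) ∈ R⁰) {x : R}
    (hx : x ∈ R⁰) (hpx : Ideal.Quotient.mk (Ideal.span {x}) p ∈ (R ⧸ Ideal.span {x})⁰) (n : ℕ) :
    Ideal.Quotient.mk (Ideal.span {∑ i ∈ Finset.range p, (1 + x) ^ (i * p ^ n)}) p ∈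
      (R ⧸ Ideal.span {∑ i ∈ Finset.range p, (1 + x) ^ (i * p ^ n)})⁰ := by
  have x_mod_p := mk_span_singleton_mem_nonZeroDivisors_swap hx hpx
  apply mk_span_singleton_mem_nonZeroDivisors_swap hp
  have p_mod_p : (p : R ⧸ Ideal.span {(p : R)}) = 0 := by
    rw [← map_natCast (Ideal.Quotient.mk _), Ideal.Quotient.mk_singleton_self]
  simpa only [map_sum, map_pow, map_add, map_one] using
    sum_one_add_pow_mem_nonZeroDivisors_of_natCast_eq_zero p p_mod_p x_mod_p n

end CommRing

section PowerSeries

variable {A : Type*} [CommRing A]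

lemma powerSeries_X_mem_nonZeroDivisors : (X : A⟦X⟧) ∈ A⟦X⟧⁰ :=
  mem_nonZeroDivisors_iff_left.2 fun _ h ↦ X_mul_cancel (h.trans (mul_zero X).symm)

lemma mk_span_X_mem_nonZeroDivisors_of_constantCoeff {f : A⟦X⟧} (hf : constantCoeff f ∈ A⁰) :
    Ideal.Quotient.mk (Ideal.span {(X : A⟦X⟧)}) f ∈ (A⟦X⟧ ⧸ Ideal.span {(X : A⟦X⟧)})⁰ := by
  rw [mk_span_singleton_mem_nonZeroDivisors_iff]
  intro g hfg
  rw [X_dvd_iff, map_mul] at hfg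
  exact X_dvd_iff.2 (mem_nonZeroDivisors_iff_left.1 hf _ hfg)

end PowerSeries

theorem quotient_En_p_torsionfree_general (p : ℕ) [Fact p.Prime] {A : Type*} [CommRing A]
    (hp : (p : A) ∈ A⁰) (n : ℕ) :
    (p : A⟦X⟧ ⧸ Ideal.span {∑ i ∈ Finset.range p, (1 + X : A⟦X⟧) ^ (i * p ^ n)}) ∈
      (A⟦X⟧ ⧸ Ideal.span {∑ i ∈ Finset.range p, (1 + X : A⟦X⟧) ^ (i * p ^ n)})⁰ := by
  have constantCoeff_p : constantCoeff (p : A⟦X⟧) ∈ A⁰ := by rwa [map_natCast]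
  have p_regular : (p : A⟦X⟧) ∈ A⟦X⟧⁰ :=
    MvPowerSeries.mem_nonZeroDivisors_of_constantCoeff constantCoeff_p
  have p_regular_mod_X := mk_span_X_mem_nonZeroDivisors_of_constantCoeff constantCoeff_p
  rw [← map_natCast (Ideal.Quotient.mk _)]
  exact mk_natCast_mem_nonZeroDivisors_quotient_sum_one_add_pow p p_regular
    powerSeries_X_mem_nonZeroDivisors p_regular_mod_X n

/-- Let `k` be a perfect field of characteristic `p`.  For every `n ≥ 0`, `p` is a
non-zero-divisor on `W(k)⟦X⟧/(E_n)`, where `E_n = ∑_{i=0}^{p-1} (1+X)^(i p^n)`;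
that is, this quotient ring has no `p`-torsion. -/
theorem quotient_En_p_torsionfree (p : ℕ) [Fact p.Prime] (k : Type*) [Field k] [CharP k p]
    [PerfectRing k p] (n : ℕ)
    (x : PowerSeries (WittVector p k) ⧸
      Ideal.span {∑ i ∈ Finset.range p,
        (1 + X : PowerSeries (WittVector p k)) ^ (i * p ^ n)})
    (hx : (p : PowerSeries (WittVector p k) ⧸
      Ideal.span {∑ i ∈ Finset.range p,
        (1 + X : PowerSeries (WittVector p k)) ^ (i * p ^ n)}) * x = 0) :
    x = 0 :=
  mem_nonZeroDivisors_iff_left.1 (quotient_En_p_torsionfree_general p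
    (mem_nonZeroDivisors_of_ne_zero (WittVector.p_nonzero p k)) n) x hx
end

section
/- Let k be a perfect field of characteristic p. For every n ≥ 0 and every positive integer a coprime to p, the ideal of W(k)⟦X⟧ generated by ∑_{i=0}^{p−1} (1+X)^{i a p^n} equals the ideal generated by E_n = ∑_{i=0}^{p−1} (1+X)^{i p^n}. -/
open PowerSeries

/-! Write `[n]_q = 1 + q + ⋯ + q ^ (n - 1)`. Splitting a geometric sum of length `p * a` in two ways
gives `[a]_q * [p]_(q ^ a) = [p * a]_q = [p]_q * [a]_(q ^ p)`. If `q` reduces to `1` along a local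
homomorphism, then `[a]_q` and `[a]_(q ^ p)` both reduce to `a`, so they are units as soon as `a` is
invertible in the target. For `W(k)⟦X⟧` take the reduction `W(k)⟦X⟧ → W(k) → k` and
`q = (1 + X) ^ (p ^ n)`. -/

theorem geom_sum_range_mul {R : Type*} [Semiring R] (x : R) (m n : ℕ) :
    ∑ i ∈ Finset.range (m * n), x ^ i =
      (∑ i ∈ Finset.range m, x ^ i) * ∑ j ∈ Finset.range n, (x ^ m) ^ j := by
  induction n with
  | zero => simp
  | succ n ih =>
    rw [Nat.mul_succ, Finset.sum_range_add, ih, Finset.sum_range_succ _ n, mul_add, ← pow_mul,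
      Finset.sum_mul _ _ (x ^ (m * n))]
    simp only [← pow_add, add_comm]

theorem isUnit_geom_sum_of_map_eq_one {R S : Type*} [Semiring R] [Semiring S] (f : R →+* S)
    [IsLocalHom f] {q : R} (hq : f q = 1) {a : ℕ} (ha : IsUnit (a : S)) :
    IsUnit (∑ j ∈ Finset.range a, q ^ j) := by
  refine IsUnit.of_map f _ ?_
  rwa [RingHom.map_geom_sum, hq, one_geom_sum]

instance isLocalHom_powerSeries_constantCoeff {A : Type*} [Ring A] :
    IsLocalHom (PowerSeries.constantCoeff : A⟦X⟧ →+* A) :=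
  ⟨fun _ => PowerSeries.isUnit_iff_constantCoeff.mpr⟩

instance isLocalHom_wittVector_constantCoeff {p : ℕ} [Fact p.Prime] {k : Type*} [CommRing k]
    [CharP k p] : IsLocalHom (WittVector.constantCoeff : WittVector p k →+* k) :=
  ⟨fun _ ⟨_, hu⟩ => (WittVector.mkUnit hu.symm).isUnit⟩

theorem span_En_twist_eq_general {R S : Type*} [CommSemiring R] [Semiring S] (f : R →+* S)
    [IsLocalHom f] {q : R} (hq : f q = 1) {a : ℕ} (ha : IsUnit (a : S)) (r : ℕ) :
    Ideal.span {∑ i ∈ Finset.range r, (q ^ a) ^ i} =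
      Ideal.span {∑ i ∈ Finset.range r, q ^ i} := by
  have isUnit_left : IsUnit (∑ j ∈ Finset.range a, q ^ j) :=
    isUnit_geom_sum_of_map_eq_one f hq ha
  have isUnit_right : IsUnit (∑ j ∈ Finset.range a, (q ^ r) ^ j) :=
    isUnit_geom_sum_of_map_eq_one f (by rw [map_pow, hq, one_pow]) ha
  rw [← Ideal.span_singleton_mul_left_unit isUnit_left, ← geom_sum_range_mul, mul_comm a r,
    geom_sum_range_mul, Ideal.span_singleton_mul_right_unit isUnit_right]

/-- Let `k` be a perfect field of characteristic `p`.  For every `n ≥ 0` and every positive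
integer `a` coprime to `p`, the ideal of `W(k)⟦X⟧` generated by
`∑_{i=0}^{p-1} (1+X)^(i a p^n)` equals the ideal generated by
`E_n = ∑_{i=0}^{p-1} (1+X)^(i p^n)`. -/
theorem span_En_twist_eq (p : ℕ) [Fact p.Prime] (k : Type*) [Field k] [CharP k p]
    [PerfectRing k p] (n a : ℕ) (ha : 0 < a) (hcop : Nat.Coprime a p) :
    Ideal.span {∑ i ∈ Finset.range p,
        (1 + X : PowerSeries (WittVector p k)) ^ (i * (a * p ^ n))} =
      Ideal.span {∑ i ∈ Finset.range p,
        (1 + X : PowerSeries (WittVector p k)) ^ (i * p ^ n)} := by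
  have hp : p.Prime := Fact.out
  have isUnit_a : IsUnit (a : k) :=
    (CharP.isUnit_natCast_iff hp).mpr (hp.coprime_iff_not_dvd.mp hcop.symm)
  simpa only [pow_mul'] using span_En_twist_eq_general
    ((WittVector.constantCoeff : WittVector p k →+* k).comp PowerSeries.constantCoeff)
    (q := (1 + X) ^ p ^ n) (by simp) isUnit_a p
end

section
/- Let R be a commutative ring equipped with a ring endomorphism φ, and let R_∞ := colim_φ R be the direct limit of the system R →φ R →φ R →φ ⋯, with its induced endomorphism. Then base change along the canonical ring homomorphism R → R_∞ induces an equivalence from the category of étale φ-modules over R to the category of étale φ-modules over R_∞. -/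
universe u

/-- An étale `φ`-module over a commutative ring `R` equipped with a ring endomorphism
`φ`: a finitely generated projective `R`-module `M` together with an isomorphism
`F : φ*M = M ⊗_{R,φ} R ≃ M`.  The isomorphism is encoded by the `φ`-semilinear map
`frob = F ∘ (m ↦ m ⊗ 1)`, and the requirement that `F` be an isomorphism is encoded by
the universal property `etale`: precomposition with `frob` identifies `R`-linear maps
out of `carrier` with `φ`-semilinear maps out of `carrier`. -/
structure EtaleModuleOver (R : Type u) [CommRing R] (φ : R →+* R) : Type (u + 1) where
  carrier : Type u
  [acg : AddCommGroup carrier]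
  [mod : Module R carrier]
  finite : Module.Finite R carrier
  projective : Module.Projective R carrier
  frob : carrier →ₛₗ[φ] carrier
  etale : ∀ (T : Type u) [AddCommGroup T] [Module R T] (g : carrier →ₛₗ[φ] T),
    ∃! h : carrier →ₗ[R] T, ∀ m, h (frob m) = g m

attribute [instance] EtaleModuleOver.acg EtaleModuleOver.mod

/-- `b : M → N` exhibits the `S`-module `N` as the base change `S ⊗_R M` of the
`R`-module `M` along the ring homomorphism `ι : R → S`, via the universal property of
base change. -/
def IsBaseChangeAlong {R S : Type u} [CommRing R] [CommRing S] (ι : R →+* S)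
    (M : Type u) [AddCommGroup M] [Module R M]
    (N : Type u) [AddCommGroup N] [Module S N] (b : M →ₛₗ[ι] N) : Prop :=
  ∀ (T : Type u) [AddCommGroup T] [Module S T] (u : M →ₛₗ[ι] T),
    ∃! v : N →ₗ[S] T, ∀ m, v (b m) = u m

/-!
Étale modules over `R` and `R_∞`, and the morphisms between them, are described by finitely many
elements of `R` and `R_∞` subject to finitely many equations. Every element of `R_∞` lies in the
image of `R` after applying a power of Frobenius, and two elements of `R` with the same image
become equal after applying a power of Frobenius. Since an étale module is isomorphic, through its
own structure map, to its pullback along any power of Frobenius, applying such a power costs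
nothing: a morphism is a fixed point of the Frobenius of the Hom module, and an étale module is the
image of the idempotent `a * b` for a pair of matrices with `a * b * a = a` and `b * a = φ(a * b)`,
where `a` gives the Frobenius and `b` its inverse; both kinds of data therefore descend to `R`.
-/

/-- The map `f` induces a bijection between the colimits of `A →α A →α A →α ⋯` and
`B →β B →β B →β ⋯`, spelled out elementwise so that it makes sense for bare maps. -/
structure IsTelescopeEquiv {A B : Type*} (α : A → A) (β : B → B) (f : A → B) : Prop where
  semiconj : Function.Semiconj f α β
  exists_iterate_eq : ∀ ⦃a a'⦄, f a = f a' → ∃ k, α^[k] a = α^[k] a'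
  exists_iterate_mem_range : ∀ b, ∃ k, β^[k] b ∈ Set.range f

theorem matrix_map_iterate {A m n : Type*} (α : A → A) (k : ℕ) (c : Matrix m n A) :
    (fun c : Matrix m n A ↦ c.map α)^[k] c = c.map α^[k] := by
  induction k with
  | zero => rfl
  | succ k ih => rw [Function.iterate_succ_apply', ih, Matrix.map_map, Function.iterate_succ']

namespace IsTelescopeEquiv

open Filter Function

section Maps

variable {A B : Type*} {α : A → A} {β : B → B} {f : A → B}

theorem eventually_iterate_eq (h : IsTelescopeEquiv α β f) {a a' : A} (haa' : f a = f a') :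
    ∀ᶠ k in atTop, α^[k] a = α^[k] a' := by
  obtain ⟨k, hk⟩ := h.exists_iterate_eq haa'
  filter_upwards [eventually_ge_atTop k] with l hl
  obtain ⟨j, rfl⟩ := Nat.exists_eq_add_of_le' hl
  simp only [iterate_add_apply, hk]

theorem eventually_iterate_mem_range (h : IsTelescopeEquiv α β f) (b : B) :
    ∀ᶠ k in atTop, β^[k] b ∈ Set.range f := by
  obtain ⟨k, a, ha⟩ := h.exists_iterate_mem_range b
  filter_upwards [eventually_ge_atTop k] with l hl
  obtain ⟨j, rfl⟩ := Nat.exists_eq_add_of_le' hl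
  exact ⟨α^[j] a, by rw [h.semiconj.iterate_right j, ha, ← iterate_add_apply]⟩

theorem existsUnique_isFixedPt (h : IsTelescopeEquiv α β f) {b : B} (hb : IsFixedPt β b) :
    ∃! a, IsFixedPt α a ∧ f a = b := by
  obtain ⟨k, a, ha⟩ := h.exists_iterate_mem_range b
  rw [(hb.iterate k).eq] at ha
  obtain ⟨l, hl⟩ := h.exists_iterate_eq (a := α a) (a' := a) (by rw [h.semiconj, ha, hb.eq])
  have hfix : IsFixedPt α (α^[l] a) := by
    rw [IsFixedPt, ← iterate_succ_apply' α, iterate_succ_apply, hl]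
  have hmap : f (α^[l] a) = b := by rw [h.semiconj.iterate_right l, ha, (hb.iterate l).eq]
  refine ⟨α^[l] a, ⟨hfix, hmap⟩, fun a' ⟨hfix', hmap'⟩ ↦ ?_⟩
  obtain ⟨m, hm⟩ := h.exists_iterate_eq (hmap'.trans hmap.symm)
  rwa [(hfix'.iterate m).eq, (hfix.iterate m).eq] at hm

theorem matrix_map {m n : Type*} [Finite m] [Finite n] (h : IsTelescopeEquiv α β f) :
    IsTelescopeEquiv (fun c : Matrix m n A ↦ c.map α) (fun c ↦ c.map β) (fun c ↦ c.map f) where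
  semiconj c := Matrix.ext fun i j ↦ h.semiconj (c i j)
  exists_iterate_eq c c' hcc' := by
    have hentry : ∀ᶠ k in atTop, ∀ i j, α^[k] (c i j) = α^[k] (c' i j) := by
      simpa only [eventually_all] using fun i j ↦
        h.eventually_iterate_eq (congrFun₂ hcc' i j)
    obtain ⟨k, hk⟩ := hentry.exists
    exact ⟨k, by simp only [matrix_map_iterate]; exact Matrix.ext hk⟩
  exists_iterate_mem_range c := by
    have hentry : ∀ᶠ k in atTop, ∀ i j, β^[k] (c i j) ∈ Set.range f := by
      simpa only [eventually_all] using fun i j ↦ h.eventually_iterate_mem_range (c i j)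
    obtain ⟨k, hk⟩ := hentry.exists
    choose a ha using hk
    exact ⟨k, Matrix.of a, by simp only [matrix_map_iterate]; exact Matrix.ext ha⟩

end Maps

theorem exists_lift_pair {A B : Type*} [Semiring A] [Semiring B] {φ : A →+* A} {ψ : B →+* B}
    {ι : A →+* B} (h : IsTelescopeEquiv φ ψ ι) {a b : B} (haba : a * b * a = a)
    (hba : b * a = ψ (a * b)) :
    ∃ k a' b', ι a' = ψ^[k] a ∧ ι b' = ψ^[k] b ∧ a' * b' * a' = a' ∧ b' * a' = φ (a' * b') := by
  obtain ⟨k, ⟨a₀, ha₀⟩, b₀, hb₀⟩ :=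
    ((h.eventually_iterate_mem_range a).and (h.eventually_iterate_mem_range b)).exists
  have haba₀ : ι (a₀ * b₀ * a₀) = ι a₀ := by
    rw [map_mul, map_mul, ha₀, hb₀, ← iterate_map_mul, ← iterate_map_mul, haba]
  have hba₀ : ι (b₀ * a₀) = ι (φ (a₀ * b₀)) := by
    rw [h.semiconj, map_mul, map_mul ι, ha₀, hb₀, ← iterate_map_mul, ← iterate_map_mul, hba,
      Commute.iterate_self]
  obtain ⟨l, hl, hl'⟩ :=
    ((h.eventually_iterate_eq haba₀).and (h.eventually_iterate_eq hba₀)).exists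
  refine ⟨l + k, φ^[l] a₀, φ^[l] b₀, ?_, ?_, ?_, ?_⟩
  · rw [h.semiconj.iterate_right l, ha₀, iterate_add_apply]
  · rw [h.semiconj.iterate_right l, hb₀, iterate_add_apply]
  · rw [← iterate_map_mul, ← iterate_map_mul, hl]
  · rw [← iterate_map_mul, hl', ← iterate_map_mul, Commute.iterate_self]

end IsTelescopeEquiv

section Colimit

variable {R : Type u} [CommRing R] (φ : R →+* R)

/-- The transition map from stage `i` to stage `j` of the system `R →φ R →φ R →φ ⋯`, meaningful
only for `i ≤ j`. -/
def telescopeMap (i j : ℕ) : R →+* R := φ ^ (j - i)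

instance : DirectedSystem (fun _ : ℕ ↦ R) fun i j _ ↦ telescopeMap φ i j where
  map_self i x := by simp [telescopeMap]
  map_map k j i hij hjk x := by
    simp [telescopeMap, ← Function.iterate_add_apply, Nat.sub_add_sub_cancel hjk hij]

/-- Mathlib's model of `colim_φ R`; it makes a ring known only by the universal property of this
colimit accessible to computation with elements. -/
abbrev Telescope : Type u := Ring.DirectLimit (fun _ : ℕ ↦ R) fun i j _ ↦ telescopeMap φ i j

namespace Telescope

/-- The canonical map from the `n`-th stage of `R →φ R →φ R →φ ⋯` to the colimit. -/
noncomputable abbrev of (n : ℕ) : R →+* Telescope φ := Ring.DirectLimit.of (fun _ : ℕ ↦ R) _ n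

theorem of_succ_comp (n : ℕ) : (of φ (n + 1)).comp φ = of φ n := by
  have hφ : telescopeMap φ n (n + 1) = φ := by simp [telescopeMap]
  ext r
  have hof := Ring.DirectLimit.of_f (f := fun i j _ ↦ telescopeMap φ i j) n.le_succ r
  rwa [hφ] at hof

variable {φ}

theorem exists_iterate_eq_zero {n : ℕ} {r : R} (hr : of φ n r = 0) : ∃ k, φ^[k] r = 0 := by
  obtain ⟨j, -, hzero⟩ := Ring.DirectLimit.of.zero_exact hr
  exact ⟨j - n, by simpa [telescopeMap] using hzero⟩

variable {S : Type u} [CommRing S] {ι : ℕ → (R →+* S)}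

theorem exists_lift (hι : ∀ n, (ι (n + 1)).comp φ = ι n) :
    ∃ w : Telescope φ →+* S, ∀ n, w.comp (of φ n) = ι n := by
  have hcocone (i j : ℕ) (hij : i ≤ j) (r : R) : ι j (telescopeMap φ i j r) = ι i r := by
    obtain ⟨k, rfl⟩ := Nat.exists_eq_add_of_le hij
    rw [telescopeMap, Nat.add_sub_cancel_left]
    induction k with
    | zero => rfl
    | succ k ih =>
      rw [pow_succ']
      exact (RingHom.congr_fun (hι (i + k)) _).trans (ih (Nat.le_add_right i k))
  exact ⟨Ring.DirectLimit.lift _ _ S ι hcocone, fun n ↦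
    RingHom.ext fun r ↦ Ring.DirectLimit.lift_of S ι hcocone n r⟩

end Telescope

end Colimit

theorem iterate_apply_stage {R S : Type*} [Semiring R] [Semiring S] {φ : R →+* R} {φS : S →+* S}
    {ι : ℕ → (R →+* S)} (hι : ∀ n, (ι (n + 1)).comp φ = ι n)
    (hφS : ∀ n, φS.comp (ι n) = (ι n).comp φ) (n : ℕ) (r : R) : φS^[n] (ι n r) = ι 0 r := by
  induction n with
  | zero => rfl
  | succ n ih => rw [Function.iterate_succ_apply, ← RingHom.comp_apply φS, hφS, hι, ih]

theorem IsTelescopeEquiv.of_isColimit {R S : Type u} [CommRing R] [CommRing S] {φ : R →+* R}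
    {φS : S →+* S} {ι : ℕ → (R →+* S)} (hι : ∀ n, (ι (n + 1)).comp φ = ι n)
    (hUP : ∀ (T : Type u) [CommRing T] (u : ℕ → (R →+* T)),
      (∀ n, (u (n + 1)).comp φ = u n) → ∃! v : S →+* T, ∀ n, v.comp (ι n) = u n)
    (hφS : ∀ n, φS.comp (ι n) = (ι n).comp φ) : IsTelescopeEquiv φ φS (ι 0) := by
  obtain ⟨v, hv, -⟩ := hUP (Telescope φ) (Telescope.of φ) (Telescope.of_succ_comp φ)
  refine ⟨fun r ↦ (RingHom.congr_fun (hφS 0) r).symm, fun r r' hrr' ↦ ?_, fun s ↦ ?_⟩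
  · have hzero : Telescope.of φ 0 (r - r') = 0 := by
      rw [← hv 0, RingHom.comp_apply, map_sub, hrr', sub_self, map_zero]
    obtain ⟨k, hk⟩ := Telescope.exists_iterate_eq_zero hzero
    exact ⟨k, by rwa [iterate_map_sub, sub_eq_zero] at hk⟩
  · obtain ⟨w, hw⟩ := Telescope.exists_lift hι
    have hwv : w.comp v = RingHom.id S :=
      (hUP S ι hι).unique (fun n ↦ by rw [RingHom.comp_assoc, hv, hw]) fun n ↦ RingHom.id_comp _
    obtain ⟨n, r, hr⟩ := Ring.DirectLimit.exists_of (v s)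
    have hs : s = ι n r := by
      rw [← hw n, RingHom.comp_apply, hr, ← RingHom.comp_apply, hwv, RingHom.id_apply]
    exact ⟨n, r, by rw [hs, iterate_apply_stage hι hφS]⟩

namespace IsBaseChangeAlong

variable {R S A : Type u} [CommRing R] [CommRing S] [CommRing A] {ι : R →+* S}
  {M : Type u} [AddCommGroup M] [Module R M] {N : Type u} [AddCommGroup N] [Module S N]
  {b : M →ₛₗ[ι] N} {τ : S →+* A} {ρ : R →+* A}
  {T : Type u} [AddCommGroup T] [Module A T]

theorem existsUnique_semilinear [RingHomCompTriple ι τ ρ] (hb : IsBaseChangeAlong ι M N b)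
    (u : M →ₛₗ[ρ] T) : ∃! v : N →ₛₗ[τ] T, ∀ m, v (b m) = u m := by
  let _ : Module S T := Module.compHom T τ
  have hsmul (r : R) (m : M) : u (r • m) = ι r • u m := by
    rw [map_smulₛₗ, ← RingHomCompTriple.comp_apply (σ₁₂ := ι) (σ₂₃ := τ)]
    rfl
  obtain ⟨v, hv, hunique⟩ := hb T { u with map_smul' := hsmul }
  refine ⟨{ v with map_smul' := v.map_smul' }, hv, fun w hw ↦ LinearMap.ext fun y ↦ ?_⟩
  exact LinearMap.congr_fun (hunique { w with map_smul' := w.map_smul' } hw) y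

/-- The extension of a semilinear map along a base change; its target may be a module over a
further ring `A`, as base change is also universal for maps semilinear over `S → A`. -/
noncomputable def lift [RingHomCompTriple ι τ ρ] (hb : IsBaseChangeAlong ι M N b)
    (u : M →ₛₗ[ρ] T) : N →ₛₗ[τ] T :=
  (hb.existsUnique_semilinear u).choose

theorem lift_apply [RingHomCompTriple ι τ ρ] (hb : IsBaseChangeAlong ι M N b) (u : M →ₛₗ[ρ] T)
    (m : M) : hb.lift (τ := τ) u (b m) = u m :=
  (hb.existsUnique_semilinear u).choose_spec.1 m

theorem hom_ext (hb : IsBaseChangeAlong ι M N b) {v w : N →ₛₗ[τ] T}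
    (h : ∀ m, v (b m) = w (b m)) : v = w :=
  have : RingHomCompTriple ι τ (τ.comp ι) := ⟨rfl⟩
  (hb.existsUnique_semilinear (w.comp b)).unique h fun _ ↦ rfl

theorem comp [RingHomCompTriple ι τ ρ] {P : Type u} [AddCommGroup P] [Module A P]
    {c : N →ₛₗ[τ] P} (hc : IsBaseChangeAlong τ N P c) (hb : IsBaseChangeAlong ι M N b) :
    IsBaseChangeAlong ρ M P (c.comp b) := fun T _ _ u ↦
  ⟨hc.lift (hb.lift u), fun m ↦ by rw [LinearMap.comp_apply, lift_apply, lift_apply],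
    fun w hw ↦ hc.hom_ext fun y ↦ by
      rw [lift_apply]
      refine LinearMap.congr_fun (hb.hom_ext (v := w.comp c) fun m ↦ ?_) y
      rw [lift_apply]
      exact hw m⟩

end IsBaseChangeAlong

/-- A finite dual basis, as in the dual basis lemma: vectors and coordinate functionals
reconstructing every element. The vectors need not be linearly independent. -/
structure ProjectiveFrame (n R M : Type*) [Fintype n] [CommRing R] [AddCommGroup M]
    [Module R M] where
  vec : n → M
  coord : n → M →ₗ[R] R
  sum_coord_smul_vec : ∀ y, ∑ i, coord i y • vec i = y

namespace ProjectiveFrame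

section Basic

variable {n R S M N : Type*} [Fintype n] [CommRing R] [CommRing S] [AddCommGroup M] [Module R M]
  [AddCommGroup N] [Module S N] {σ : R →+* S}

/-- The frame of a retract of `n → R`, given by the images of the standard basis vectors. -/
def ofRetraction [DecidableEq n] (p : (n → R) →ₗ[R] M) (s : M →ₗ[R] n → R)
    (h : p ∘ₗ s = LinearMap.id) : ProjectiveFrame n R M where
  vec i := p (Pi.single i 1)
  coord i := LinearMap.proj i ∘ₗ s
  sum_coord_smul_vec y := by
    simp only [LinearMap.comp_apply, LinearMap.proj_apply, ← map_smul, ← map_sum,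
      ← Pi.single_smul, smul_eq_mul, mul_one, Finset.univ_sum_single]
    exact LinearMap.congr_fun h y

theorem nonempty_of_projective (R M : Type*) [CommRing R] [AddCommGroup M] [Module R M]
    [Module.Finite R M] [Module.Projective R M] :
    ∃ n, Nonempty (ProjectiveFrame (Fin n) R M) :=
  have ⟨n, p, s, _, _, hps⟩ := Module.Finite.exists_comp_eq_id_of_projective R M
  ⟨n, ⟨ofRetraction p s hps⟩⟩

theorem projective (B : ProjectiveFrame n R M) : Module.Projective R M :=
  Module.Projective.of_split (LinearMap.pi B.coord) (Fintype.linearCombination R B.vec)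
    (LinearMap.ext B.sum_coord_smul_vec)

theorem finite (B : ProjectiveFrame n R M) : Module.Finite R M :=
  Module.Finite.of_surjective (Fintype.linearCombination R B.vec) fun y ↦
    ⟨fun i ↦ B.coord i y, B.sum_coord_smul_vec y⟩

theorem map_eq_sum (B : ProjectiveFrame n R M) (u : M →ₛₗ[σ] N) (y : M) :
    u y = ∑ i, σ (B.coord i y) • u (B.vec i) := by
  conv_lhs => rw [← B.sum_coord_smul_vec y]
  simp only [map_sum, map_smulₛₗ]

theorem hom_ext (B : ProjectiveFrame n R M) {u w : M →ₛₗ[σ] N}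
    (h : ∀ i, u (B.vec i) = w (B.vec i)) : u = w :=
  LinearMap.ext fun y ↦ by
    rw [B.map_eq_sum u, B.map_eq_sum w]
    simp only [h]

/-- The semilinear map sending `y` to the combination of the vectors `w i` with the coordinates
of `y`. Since a frame may have relations, it need not send `B.vec i` to `w i`. -/
def constr (B : ProjectiveFrame n R M) (σ : R →+* S) (w : n → N) : M →ₛₗ[σ] N where
  toFun y := ∑ i, σ (B.coord i y) • w i
  map_add' y z := by simp only [map_add, add_smul, Finset.sum_add_distrib]
  map_smul' r y := by simp only [map_smul, smul_eq_mul, map_mul, mul_smul, Finset.smul_sum]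

theorem constr_apply (B : ProjectiveFrame n R M) (σ : R →+* S) (w : n → N) (y : M) :
    B.constr σ w y = ∑ i, σ (B.coord i y) • w i := rfl

/-- The matrix whose columns are the coordinates of the vectors `w j`. For `w = B.vec` it is
the idempotent cutting out `M` in the free module. -/
def toMatrix (B : ProjectiveFrame n R M) (w : n → M) : Matrix n n R :=
  Matrix.of fun i j ↦ B.coord i (w j)

theorem toMatrix_apply (B : ProjectiveFrame n R M) (w : n → M) (i j : n) :
    B.toMatrix w i j = B.coord i (w j) := rfl

theorem toMatrix_mul_toMatrix (B C : ProjectiveFrame n R M) (w : n → M) :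
    B.toMatrix C.vec * C.toMatrix w = B.toMatrix w := by
  ext i j
  rw [Matrix.mul_apply, toMatrix_apply, C.map_eq_sum (B.coord i) (w j)]
  exact Finset.sum_congr rfl fun k _ ↦ mul_comm _ _

theorem ofRetraction_toMatrix_vec [DecidableEq n] {p p' : (n → R) →ₗ[R] M} {s s' : M →ₗ[R] n → R}
    (h : p ∘ₗ s = LinearMap.id) (h' : p' ∘ₗ s' = LinearMap.id) :
    (ofRetraction p s h).toMatrix (ofRetraction p' s' h').vec = LinearMap.toMatrix' (s ∘ₗ p') := by
  ext i j
  rw [LinearMap.toMatrix'_apply]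
  rfl

section MatchingGram

variable {B : ProjectiveFrame n R M} {C : ProjectiveFrame n S N}

theorem constr_vec (h : C.toMatrix C.vec = (B.toMatrix B.vec).map σ) (i : n) :
    B.constr σ C.vec (B.vec i) = C.vec i := by
  rw [constr_apply, ← C.sum_coord_smul_vec (C.vec i)]
  refine Finset.sum_congr rfl fun j _ ↦ congrArg (· • C.vec j) ?_
  exact (congrFun₂ h j i).symm

theorem coord_constr (h : C.toMatrix C.vec = (B.toMatrix B.vec).map σ) (i : n) (y : M) :
    C.coord i (B.constr σ C.vec y) = σ (B.coord i y) := by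
  rw [constr_apply, map_sum, B.map_eq_sum (B.coord i) y, map_sum]
  refine Finset.sum_congr rfl fun j _ ↦ ?_
  rw [map_smul, smul_eq_mul, smul_eq_mul, map_mul, RingHom.id_apply]
  exact congrArg (σ (B.coord j y) * ·) (congrFun₂ h i j)

theorem constr_semiconj {φ : R →+* R} {φS : S →+* S} {F : M →ₛₗ[φ] M} {G : N →ₛₗ[φS] N}
    (hσ : Function.Semiconj σ φ φS) (h : C.toMatrix C.vec = (B.toMatrix B.vec).map σ)
    (hFG : C.toMatrix (G ∘ C.vec) = (B.toMatrix (F ∘ B.vec)).map σ) :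
    Function.Semiconj (B.constr σ C.vec) F G := by
  have : RingHomCompTriple φ σ (σ.comp φ) := ⟨rfl⟩
  have : RingHomCompTriple σ φS (σ.comp φ) := ⟨RingHom.ext fun r ↦ (hσ r).symm⟩
  suffices (B.constr σ C.vec).comp F = G.comp (B.constr σ C.vec) from LinearMap.congr_fun this
  refine B.hom_ext fun i ↦ ?_
  rw [LinearMap.comp_apply, LinearMap.comp_apply, constr_vec h, constr_apply,
    ← C.sum_coord_smul_vec (G (C.vec i))]
  exact Finset.sum_congr rfl fun j _ ↦ congrArg (· • C.vec j) (congrFun₂ hFG j i).symm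

end MatchingGram

end Basic

section BaseChange

variable {n : Type*} [Fintype n] {R S : Type u} [CommRing R] [CommRing S] {σ : R →+* S}
  {M : Type u} [AddCommGroup M] [Module R M] {N : Type u} [AddCommGroup N] [Module S N]
  {b : M →ₛₗ[σ] N}

/-- The image of a frame under base change. -/
noncomputable def baseChange (B : ProjectiveFrame n R M) (hb : IsBaseChangeAlong σ M N b) :
    ProjectiveFrame n S N where
  vec i := b (B.vec i)
  coord i := hb.lift (σ.toSemilinearMap.comp (B.coord i))
  sum_coord_smul_vec y := by
    let reconstruct : N →ₗ[S] N :=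
      ∑ i, (hb.lift (σ.toSemilinearMap.comp (B.coord i)) : N →ₗ[S] S).smulRight (b (B.vec i))
    have hid : reconstruct = LinearMap.id := hb.hom_ext fun m ↦ by
      simp [reconstruct, hb.lift_apply, ← B.map_eq_sum b m]
    simpa [reconstruct] using LinearMap.congr_fun hid y

theorem baseChange_coord_apply (B : ProjectiveFrame n R M) (hb : IsBaseChangeAlong σ M N b)
    (i : n) (m : M) : (B.baseChange hb).coord i (b m) = σ (B.coord i m) :=
  hb.lift_apply _ m

theorem baseChange_toMatrix (B : ProjectiveFrame n R M) (hb : IsBaseChangeAlong σ M N b)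
    (w : n → M) : (B.baseChange hb).toMatrix (b ∘ w) = (B.toMatrix w).map σ :=
  Matrix.ext fun i j ↦ B.baseChange_coord_apply hb i (w j)

theorem isBaseChangeAlong_constr {B : ProjectiveFrame n R M} {C : ProjectiveFrame n S N}
    (h : C.toMatrix C.vec = (B.toMatrix B.vec).map σ) :
    IsBaseChangeAlong σ M N (B.constr σ C.vec) := fun T _ _ u ↦ by
  refine ⟨C.constr (RingHom.id S) (u ∘ B.vec), fun m ↦ ?_, fun v hv ↦ C.hom_ext fun i ↦ ?_⟩
  · simp only [C.constr_apply, coord_constr h, RingHom.id_apply, Function.comp_apply,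
      ← B.map_eq_sum u m]
  · rw [← constr_vec h i, hv, C.constr_apply, B.map_eq_sum u]
    simp only [coord_constr h, RingHom.id_apply, Function.comp_apply]

end BaseChange

end ProjectiveFrame

section FrobeniusIterate

variable {R : Type*} [CommRing R] {φ : R →+* R} {M : Type*} [AddCommGroup M] [Module R M]

/-- The iterate `F^[k]` as a `φ ^ k`-semilinear map. -/
def semilinearIterate (F : M →ₛₗ[φ] M) (k : ℕ) : M →ₛₗ[φ ^ k] M where
  toFun := F^[k]
  map_add' := iterate_map_add F k
  map_smul' r m := by
    induction k generalizing r m with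
    | zero => rfl
    | succ k ih =>
      rw [Function.iterate_succ_apply, map_smulₛₗ, ih, pow_succ]
      rfl

end FrobeniusIterate

namespace IsBaseChangeAlong

variable {R S : Type u} [CommRing R] [CommRing S] {φ : R →+* R} {φS : S →+* S} {σ : R →+* S}
  {M : Type u} [AddCommGroup M] [Module R M] {F : M →ₛₗ[φ] M}
  {N : Type u} [AddCommGroup N] [Module S N]

theorem iterate (hF : IsBaseChangeAlong φ M M F) (k : ℕ) :
    IsBaseChangeAlong (φ ^ k) M M (semilinearIterate F k) := by
  induction k with
  | zero =>
    exact fun T _ _ u ↦ ⟨{ u with map_smul' := u.map_smul' }, fun _ ↦ rfl,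
      fun v hv ↦ LinearMap.ext hv⟩
  | succ k ih =>
    have : RingHomCompTriple φ (φ ^ k) (φ ^ (k + 1)) := ⟨(pow_succ φ k).symm⟩
    exact ih.comp hF

/-- If `F` makes `M` étale, the `φ`-semilinear operator on `Hom(M, N)` sending `u` to
`F_N ∘ φ*u ∘ F_M⁻¹`, where `F_M` and `F_N` are the linearizations of `F` and `G`. -/
noncomputable def homFrobenius (hF : IsBaseChangeAlong φ M M F) (hσ : Function.Semiconj σ φ φS)
    (G : N →ₛₗ[φS] N) (u : M →ₛₗ[σ] N) : M →ₛₗ[σ] N :=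
  have : RingHomCompTriple σ φS (σ.comp φ) := ⟨RingHom.ext fun r ↦ (hσ r).symm⟩
  have : RingHomCompTriple φ σ (σ.comp φ) := ⟨rfl⟩
  hF.lift (G.comp u)

variable (hF : IsBaseChangeAlong φ M M F) (hσ : Function.Semiconj σ φ φS) (G : N →ₛₗ[φS] N)

theorem homFrobenius_apply (u : M →ₛₗ[σ] N) (m : M) :
    hF.homFrobenius hσ G u (F m) = G (u m) :=
  have : RingHomCompTriple σ φS (σ.comp φ) := ⟨RingHom.ext fun r ↦ (hσ r).symm⟩
  have : RingHomCompTriple φ σ (σ.comp φ) := ⟨rfl⟩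
  hF.lift_apply (G.comp u) m

theorem iterate_homFrobenius_apply (k : ℕ) (u : M →ₛₗ[σ] N) (m : M) :
    (hF.homFrobenius hσ G)^[k] u (F^[k] m) = G^[k] (u m) := by
  induction k with
  | zero => rfl
  | succ k ih => simp only [Function.iterate_succ_apply', homFrobenius_apply, ih]

theorem isFixedPt_homFrobenius_iff {u : M →ₛₗ[σ] N} :
    Function.IsFixedPt (hF.homFrobenius hσ G) u ↔ ∀ m, u (F m) = G (u m) := by
  refine ⟨fun hu m ↦ ?_, fun hu ↦ hF.hom_ext fun m ↦ ?_⟩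
  · rw [← hF.homFrobenius_apply hσ G, hu.eq]
  · rw [homFrobenius_apply, hu]

end IsBaseChangeAlong

namespace ProjectiveFrame

variable {n : Type*} [Fintype n] {R M : Type u} [CommRing R] {φ : R →+* R} [AddCommGroup M]
  [Module R M] {F : M →ₛₗ[φ] M}

theorem iterate_eq_sum (B : ProjectiveFrame n R M) (F : M →ₛₗ[φ] M) (k : ℕ) (y : M) :
    F^[k] y = ∑ i, φ^[k] (B.coord i y) • F^[k] (B.vec i) := by
  rw [← RingHom.coe_pow]
  exact B.map_eq_sum (semilinearIterate F k) y

theorem baseChange_iterate_vec (B : ProjectiveFrame n R M) (hF : IsBaseChangeAlong φ M M F)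
    (k : ℕ) (i : n) : (B.baseChange (hF.iterate k)).vec i = F^[k] (B.vec i) := rfl

theorem baseChange_iterate_toMatrix [DecidableEq n] (B : ProjectiveFrame n R M)
    (hF : IsBaseChangeAlong φ M M F) (k : ℕ) (w : n → M) :
    (B.baseChange (hF.iterate k)).toMatrix (F^[k] ∘ w) = φ.mapMatrix^[k] (B.toMatrix w) := by
  refine (B.baseChange_toMatrix (hF.iterate k) w).trans ?_
  rw [RingHom.coe_pow]
  exact (matrix_map_iterate φ k _).symm

end ProjectiveFrame

theorem semiconj_id {R : Type*} [Semiring R] (φ : R →+* R) :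
    Function.Semiconj (RingHom.id R) φ φ :=
  fun _ ↦ rfl

namespace IsTelescopeEquiv

open Filter Function

variable {n : Type*} [Fintype n] {R S : Type u} [CommRing R] [CommRing S]
  {φ : R →+* R} {φS : S →+* S} {ι : R →+* S}
  {M : Type u} [AddCommGroup M] [Module R M] {N : Type u} [AddCommGroup N] [Module S N]
  {F : M →ₛₗ[φ] M} {G : N →ₛₗ[φS] N} {b : M →ₛₗ[ι] N}

theorem of_isBaseChangeAlong (h : IsTelescopeEquiv φ φS ι) (B : ProjectiveFrame n R M)
    (hb : IsBaseChangeAlong ι M N b) (hFG : Semiconj b F G) : IsTelescopeEquiv F G b where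
  semiconj := hFG
  exists_iterate_eq m m' hmm' := by
    have hcoord (i : n) : ι (B.coord i m) = ι (B.coord i m') := by
      rw [← B.baseChange_coord_apply hb, hmm', B.baseChange_coord_apply]
    obtain ⟨k, hk⟩ := (eventually_all.2 fun i ↦ h.eventually_iterate_eq (hcoord i)).exists
    exact ⟨k, by rw [B.iterate_eq_sum F k m, B.iterate_eq_sum F k m']; simp only [hk]⟩
  exists_iterate_mem_range y := by
    let C := B.baseChange hb
    obtain ⟨k, hk⟩ :=
      (eventually_all.2 fun i ↦ h.eventually_iterate_mem_range (C.coord i y)).exists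
    choose r hr using hk
    refine ⟨k, ∑ i, r i • F^[k] (B.vec i), ?_⟩
    rw [C.iterate_eq_sum G k, map_sum]
    refine Finset.sum_congr rfl fun i _ ↦ ?_
    rw [map_smulₛₗ, hr, hFG.iterate_right k]
    rfl

theorem hom {P : Type u} [AddCommGroup P] [Module R P] {E : P →ₛₗ[φ] P}
    (h : IsTelescopeEquiv F G b) (hι : Semiconj ι φ φS) (B : ProjectiveFrame n R P)
    (hE : IsBaseChangeAlong φ P P E) :
    IsTelescopeEquiv (hE.homFrobenius (semiconj_id φ) F)
      (hE.homFrobenius hι G) fun u ↦ b.comp u where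
  semiconj u := hE.hom_ext fun x ↦ by
    simp only [LinearMap.comp_apply, IsBaseChangeAlong.homFrobenius_apply]
    exact h.semiconj (u x)
  exists_iterate_eq u u' huu' := by
    have hvec (i : n) : b (u (B.vec i)) = b (u' (B.vec i)) := LinearMap.congr_fun huu' (B.vec i)
    obtain ⟨k, hk⟩ := (eventually_all.2 fun i ↦ h.eventually_iterate_eq (hvec i)).exists
    refine ⟨k, (B.baseChange (hE.iterate k)).hom_ext fun i ↦ ?_⟩
    rw [B.baseChange_iterate_vec hE, hE.iterate_homFrobenius_apply, hk,
      hE.iterate_homFrobenius_apply]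
  exists_iterate_mem_range u := by
    obtain ⟨k, hk⟩ :=
      (eventually_all.2 fun i ↦ h.eventually_iterate_mem_range (u (B.vec i))).exists
    choose m hm using hk
    let C := B.baseChange (hE.iterate k)
    refine ⟨k, C.constr (RingHom.id R) m, LinearMap.ext fun x ↦ ?_⟩
    rw [LinearMap.comp_apply, C.constr_apply, map_sum, C.map_eq_sum]
    refine Finset.sum_congr rfl fun i _ ↦ ?_
    rw [map_smulₛₗ, hm, B.baseChange_iterate_vec hE, hE.iterate_homFrobenius_apply]
    rfl

end IsTelescopeEquiv

namespace EtaleModuleOver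

variable {R S : Type u} [CommRing R] [CommRing S] {φ : R →+* R} {φS : S →+* S} {ι : R →+* S}

attribute [instance] EtaleModuleOver.finite EtaleModuleOver.projective

theorem existsUnique_hom (M : EtaleModuleOver R φ) (h : IsTelescopeEquiv φ φS ι)
    {P : Type u} [AddCommGroup P] [Module R P] [Module.Finite R P] [Module.Projective R P]
    {N : Type u} [AddCommGroup N] [Module S N] {F : P →ₛₗ[φ] P} {G : N →ₛₗ[φS] N} {b : P →ₛₗ[ι] N}
    (hb : IsBaseChangeAlong ι P N b) (hFG : Function.Semiconj b F G)
    {u : M.carrier →ₛₗ[ι] N} (hu : ∀ m, u (M.frob m) = G (u m)) :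
    ∃! f : M.carrier →ₗ[R] P, (∀ m, f (M.frob m) = F (f m)) ∧ b.comp f = u := by
  obtain ⟨_, ⟨B⟩⟩ := ProjectiveFrame.nonempty_of_projective R M.carrier
  obtain ⟨_, ⟨C⟩⟩ := ProjectiveFrame.nonempty_of_projective R P
  have hM : IsBaseChangeAlong φ M.carrier M.carrier M.frob := M.etale
  have hhom := (h.of_isBaseChangeAlong C hb hFG).hom h.semiconj B hM
  simpa only [hM.isFixedPt_homFrobenius_iff] using
    hhom.existsUnique_isFixedPt ((hM.isFixedPt_homFrobenius_iff h.semiconj G).2 hu)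

/-- The étale module with a prescribed frame `B`, whose Frobenius sends the vectors of `B` to
those of `C`. -/
def ofFrames {n : Type*} [Fintype n] {M : Type u} [AddCommGroup M] [Module R M]
    (B C : ProjectiveFrame n R M) (h : C.toMatrix C.vec = (B.toMatrix B.vec).map φ) :
    EtaleModuleOver R φ where
  carrier := M
  finite := B.finite
  projective := B.projective
  frob := B.constr φ C.vec
  etale := ProjectiveFrame.isBaseChangeAlong_constr h

theorem exists_frame_of_matrix {n : Type} [Fintype n] {a b : Matrix n n R}
    (haba : a * b * a = a) (hba : b * a = (a * b).map φ) :
    ∃ (M : EtaleModuleOver R φ) (B : ProjectiveFrame n R M.carrier),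
      B.toMatrix B.vec = a * b ∧ B.toMatrix (M.frob ∘ B.vec) = a := by
  classical
  let p := a.mulVecLin.rangeRestrict
  let s := (LinearMap.range a.mulVecLin).subtype
  have hretract : p ∘ₗ b.mulVecLin ∘ₗ s = LinearMap.id := by
    refine LinearMap.ext fun ⟨_, x, rfl⟩ ↦ Subtype.ext ?_
    change a.mulVec (b.mulVec (a.mulVec x)) = a.mulVec x
    rw [Matrix.mulVec_mulVec, Matrix.mulVec_mulVec, haba]
  let B := ProjectiveFrame.ofRetraction (p ∘ₗ b.mulVecLin) s hretract
  let C := ProjectiveFrame.ofRetraction p (b.mulVecLin ∘ₗ s) hretract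
  have hBC : B.toMatrix C.vec = a := by
    rw [ProjectiveFrame.ofRetraction_toMatrix_vec]
    exact LinearMap.toMatrix'_toLin' a
  have hBB : B.toMatrix B.vec = a * b := by
    rw [ProjectiveFrame.ofRetraction_toMatrix_vec, ← LinearMap.comp_assoc, LinearMap.toMatrix'_comp]
    exact congrArg₂ _ (LinearMap.toMatrix'_toLin' a) (LinearMap.toMatrix'_toLin' b)
  have hCC : C.toMatrix C.vec = b * a := by
    rw [ProjectiveFrame.ofRetraction_toMatrix_vec, LinearMap.comp_assoc, LinearMap.toMatrix'_comp]
    exact congrArg₂ _ (LinearMap.toMatrix'_toLin' b) (LinearMap.toMatrix'_toLin' a)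
  have hφ : C.toMatrix C.vec = (B.toMatrix B.vec).map φ := by rw [hCC, hBB, hba]
  refine ⟨ofFrames B C hφ, B, hBB, ?_⟩
  exact (congrArg B.toMatrix (funext (ProjectiveFrame.constr_vec hφ))).trans hBC

theorem exists_isBaseChangeAlong (h : IsTelescopeEquiv φ φS ι) (N : EtaleModuleOver S φS) :
    ∃ (M : EtaleModuleOver R φ) (b : M.carrier →ₛₗ[ι] N.carrier),
      (∀ m, b (M.frob m) = N.frob (b m)) ∧ IsBaseChangeAlong ι M.carrier N.carrier b := by
  obtain ⟨n, ⟨C⟩⟩ := ProjectiveFrame.nonempty_of_projective S N.carrier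
  have hN : IsBaseChangeAlong φS N.carrier N.carrier N.frob := N.etale
  let D := C.baseChange hN
  have hCD : C.toMatrix D.vec * D.toMatrix C.vec = C.toMatrix C.vec := C.toMatrix_mul_toMatrix D _
  obtain ⟨k, a, b, ha, hb, haba, hba⟩ :=
    IsTelescopeEquiv.exists_lift_pair (φ := φ.mapMatrix) (ψ := φS.mapMatrix) (ι := ι.mapMatrix)
      h.matrix_map (a := C.toMatrix D.vec) (b := D.toMatrix C.vec)
      (by rw [hCD, C.toMatrix_mul_toMatrix C])
      (by rw [hCD, D.toMatrix_mul_toMatrix C]; exact C.baseChange_toMatrix hN C.vec)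
  obtain ⟨M, B, hB, hBF⟩ := exists_frame_of_matrix haba hba
  let E := C.baseChange (hN.iterate k)
  have hE : E.toMatrix E.vec = (B.toMatrix B.vec).map ι := by
    refine (C.baseChange_iterate_toMatrix hN k C.vec).trans ?_
    rw [← hCD, iterate_map_mul, ← ha, ← hb, ← map_mul, ← hB]
    rfl
  have hfrob : N.frob ∘ E.vec = N.frob^[k] ∘ D.vec := by
    ext i
    exact (Function.Commute.self_iterate N.frob k).eq (C.vec i)
  have hEF : E.toMatrix (N.frob ∘ E.vec) = (B.toMatrix (M.frob ∘ B.vec)).map ι := by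
    rw [hfrob, C.baseChange_iterate_toMatrix hN k D.vec, ← ha, hBF]
    rfl
  exact ⟨M, B.constr ι E.vec, ProjectiveFrame.constr_semiconj h.semiconj hE hEF,
    ProjectiveFrame.isBaseChangeAlong_constr hE⟩

end EtaleModuleOver

theorem etale_phi_modules_equivalence_over_perfection_general {R S : Type u} [CommRing R]
    [CommRing S] {φ : R →+* R} {φS : S →+* S} {ι : R →+* S} (h : IsTelescopeEquiv φ φS ι) :
    (∀ N : EtaleModuleOver S φS, ∃ (M : EtaleModuleOver R φ) (b : M.carrier →ₛₗ[ι] N.carrier),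
      (∀ m, b (M.frob m) = N.frob (b m)) ∧ IsBaseChangeAlong ι M.carrier N.carrier b) ∧
    (∀ (M₁ M₂ : EtaleModuleOver R φ) (N₁ N₂ : EtaleModuleOver S φS)
      (b₁ : M₁.carrier →ₛₗ[ι] N₁.carrier) (b₂ : M₂.carrier →ₛₗ[ι] N₂.carrier),
      (∀ m, b₁ (M₁.frob m) = N₁.frob (b₁ m)) →
      (∀ m, b₂ (M₂.frob m) = N₂.frob (b₂ m)) →
      IsBaseChangeAlong ι M₂.carrier N₂.carrier b₂ →
      ∀ v : N₁.carrier →ₗ[S] N₂.carrier, (∀ x, v (N₁.frob x) = N₂.frob (v x)) →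
        ∃! f : M₁.carrier →ₗ[R] M₂.carrier,
          (∀ m, f (M₁.frob m) = M₂.frob (f m)) ∧ (∀ m, v (b₁ m) = b₂ (f m))) := by
  refine ⟨fun N ↦ N.exists_isBaseChangeAlong h,
    fun M₁ M₂ N₁ N₂ b₁ b₂ hb₁ hb₂ hbase v hv ↦ ?_⟩
  have hvb₁ (m : M₁.carrier) : v.comp b₁ (M₁.frob m) = N₂.frob (v.comp b₁ m) := by
    rw [LinearMap.comp_apply, hb₁, hv, LinearMap.comp_apply]
  simpa only [LinearMap.ext_iff, LinearMap.comp_apply, eq_comm] using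
    M₁.existsUnique_hom h hbase hb₂ hvb₁

/-- Let `R` be a commutative ring with endomorphism `φ` and let `R_∞ = colim_φ R` be
the direct limit of `R →φ R →φ R →φ ⋯` (encoded by a cocone `ι n : R → S` with
`ι (n+1) ∘ φ = ι n` satisfying the universal property of the colimit), equipped with
its induced endomorphism `φS` (characterized by `φS ∘ ι n = ι n ∘ φ`).  Then base
change along the canonical map `ι 0 : R → R_∞` induces an equivalence from étale
`φ`-modules over `R` to étale `φ`-modules over `R_∞`: it is essentially surjective
(every étale module over `R_∞` arises as a base change, compatibly with the étale
structures) and fully faithful (morphisms between base changes descend uniquely). -/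
theorem etale_phi_modules_equivalence_over_perfection
    {R S : Type u} [CommRing R] [CommRing S]
    (φ : R →+* R) (φS : S →+* S)
    (ι : ℕ → (R →+* S))
    (hι : ∀ n, (ι (n + 1)).comp φ = ι n)
    (hUP : ∀ (T : Type u) [CommRing T] (u : ℕ → (R →+* T)),
      (∀ n, (u (n + 1)).comp φ = u n) → ∃! v : S →+* T, ∀ n, v.comp (ι n) = u n)
    (hφS : ∀ n, φS.comp (ι n) = (ι n).comp φ) :
    (∀ N : EtaleModuleOver S φS,
      ∃ (M : EtaleModuleOver R φ) (b : M.carrier →ₛₗ[ι 0] N.carrier),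
        (∀ m, b (M.frob m) = N.frob (b m)) ∧
          IsBaseChangeAlong (ι 0) M.carrier N.carrier b) ∧
    (∀ (M₁ M₂ : EtaleModuleOver R φ) (N₁ N₂ : EtaleModuleOver S φS)
      (b₁ : M₁.carrier →ₛₗ[ι 0] N₁.carrier) (b₂ : M₂.carrier →ₛₗ[ι 0] N₂.carrier),
      (∀ m, b₁ (M₁.frob m) = N₁.frob (b₁ m)) →
      (∀ m, b₂ (M₂.frob m) = N₂.frob (b₂ m)) →
      IsBaseChangeAlong (ι 0) M₁.carrier N₁.carrier b₁ →
      IsBaseChangeAlong (ι 0) M₂.carrier N₂.carrier b₂ →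
      ∀ v : N₁.carrier →ₗ[S] N₂.carrier, (∀ x, v (N₁.frob x) = N₂.frob (v x)) →
        ∃! h : M₁.carrier →ₗ[R] M₂.carrier,
          (∀ m, h (M₁.frob m) = M₂.frob (h m)) ∧ (∀ m, v (b₁ m) = b₂ (h m))) := by
  have ⟨hsurj, hfull⟩ := etale_phi_modules_equivalence_over_perfection_general
    (IsTelescopeEquiv.of_isColimit hι hUP hφS)
  exact ⟨hsurj, fun M₁ M₂ N₁ N₂ b₁ b₂ hb₁ hb₂ _ ↦ hfull M₁ M₂ N₁ N₂ b₁ b₂ hb₁ hb₂⟩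
end
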